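/- Equivalence of the two characterizations of ambiguity: for every valid date D and every period p = (py, pm, pd), the computation is ambiguous in the intensional sense iff the two non-error rounding modes disagree, i.e. D +⊥ p = ⊥ if and only if D +↓ p ≠ D +↑ p. -/

import Mathlib

/-- A value is either a date `(y, m, d)` (a triple of integers in the
Gregorian calendar) or the error element `⊥`. -/
inductive DValue : Type
  | date (y m d : ℤ) : DValue
  | bot : DValue
deriving DecidableEq

/-- `nb_days(y, m)`: the number of days of month `m` in year `y`
(meaningful for `1 ≤ m ≤ 12`). A year is leap iff it is divisible by 4
and not by 100, or divisible by 400. -/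
def nbDays (y m : ℤ) : ℤ :=
  if m = 2 then (if (4 ∣ y ∧ ¬ (100 ∣ y)) ∨ 400 ∣ y then 29 else 28)
  else if m = 4 ∨ m = 6 ∨ m = 9 ∨ m = 11 then 30
  else 31

theorem nbDays_bounds (y m : ℤ) : 28 ≤ nbDays y m ∧ nbDays y m ≤ 31 := by
  unfold nbDays; split_ifs <;> omega

/-- A date `(y, m, d)` is valid iff `1 ≤ m ≤ 12` and `1 ≤ d ≤ nb_days(y, m)`. -/
def ValidDate (y m d : ℤ) : Prop :=
  1 ≤ m ∧ m ≤ 12 ∧ 1 ≤ d ∧ d ≤ nbDays y m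

/-- Year addition: `(y,m,d) +y n = (y+n,m,d)`; `⊥ +y n = ⊥`. -/
def DValue.addY : DValue → ℤ → DValue
  | .date y m d, n => .date (y + n) m d
  | .bot, _ => .bot

/-- Month addition on a date `(y, m, d)` (with `⊥` for a month component
outside `[1,12]`):
`(y,m,d) +m n = (y,m+n,d)` if `1 ≤ m+n ≤ 12`,
`= (y+1,m,d) +m (n−12)` if `m+n > 12`, `= (y−1,m,d) +m (n+12)` if `m+n < 1`. -/
def addMonths (y m d n : ℤ) : DValue :=
  if _h : 1 ≤ m ∧ m ≤ 12 then
    if _h1 : 1 ≤ m + n ∧ m + n ≤ 12 then .date y (m + n) d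
    else if _h2 : 12 < m + n then addMonths (y + 1) m d (n - 12)
    else addMonths (y - 1) m d (n + 12)
  else .bot
termination_by (m + n - 12).toNat + (1 - (m + n)).toNat
decreasing_by all_goals omega

/-- Month addition on values: `⊥ +m n = ⊥`. -/
def DValue.addM : DValue → ℤ → DValue
  | .date y m d, n => addMonths y m d n
  | .bot, _ => .bot

/-- Day addition, following the rules:
for `(y,m,d)` with `1 ≤ d ≤ nb_days(y,m)`:
`(y,m,d) +d n = (y,m,d+n)` if `1 ≤ d+n ≤ nb_days(y,m)`;
`= ((y,m,1) +m 1) +d (n − (nb_days(y,m) − d) − 1)` if `d+n > nb_days(y,m)`;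
`= (y,m,1) +d (d−1+n)` if `d+n ≤ 0` and `d > 1`;
if `n+1 ≤ 0` then, letting `(y',m',d') = (y,m,1) +m (−1)`,
`(y,m,1) +d n = (y',m',1) +d (n + nb_days(y',m'))`.
If `d < 1` or `d > nb_days(y,m)` (or the month is out of range), the result is `⊥`. -/
def addDays (y m d n : ℤ) : DValue :=
  if _hm : 1 ≤ m ∧ m ≤ 12 then
    if _hd : 1 ≤ d ∧ d ≤ nbDays y m then
      if _h1 : 1 ≤ d + n ∧ d + n ≤ nbDays y m then .date y m (d + n)
      else if _h2 : nbDays y m < d + n then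
        match addMonths y m 1 1 with
        | .date y' m' _ => addDays y' m' 1 (n - (nbDays y m - d) - 1)
        | .bot => .bot
      else if _h3 : 1 < d then addDays y m 1 (d - 1 + n)
      else
        match _hprev : addMonths y m 1 (-1) with
        | .date y' m' _ => addDays y' m' 1 (n + nbDays y' m')
        | .bot => .bot
    else .bot
  else .bot
termination_by (if 0 ≤ n then n else 62 - n).toNat
decreasing_by
  · split_ifs <;> omega
  · split_ifs <;> omega
  · have h28 := nbDays_bounds y' m'
    split_ifs <;> omega

/-- Day addition on values: `⊥ +d n = ⊥`. -/
def DValue.addD : DValue → ℤ → DValue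
  | .date y m d, n => addDays y m d n
  | .bot, _ => .bot

/-- Rounding modes: down (`↓`), up (`↑`) and error (`⊥`). -/
inductive RMode : Type
  | down | up | err
deriving DecidableEq

/-- Rounding `rnd_r`: if `1 ≤ d ≤ nb_days(y,m)` then `rnd_r(y,m,d) = (y,m,d)`;
if `d > nb_days(y,m)` then `rnd_↓(y,m,d) = (y,m,nb_days(y,m))`,
`rnd_↑(y,m,d) = (y',m',1)` where `(y',m',d') = (y,m,d) +m 1`, and
`rnd_⊥(y,m,d) = ⊥`; if `d < 1` then `rnd_r(y,m,d) = ⊥`; `rnd_r(⊥) = ⊥`. -/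
def rnd (r : RMode) : DValue → DValue
  | .date y m d =>
    if 1 ≤ d ∧ d ≤ nbDays y m then .date y m d
    else if d < 1 then .bot
    else
      match r with
      | .down => .date y m (nbDays y m)
      | .up =>
        match addMonths y m d 1 with
        | .date y' m' _ => .date y' m' 1
        | .bot => .bot
      | .err => .bot
  | .bot => .bot

/-- A period `(py, pm, pd)`: a number of years, months and days. -/
structure Period : Type where
  py : ℤ
  pm : ℤ
  pd : ℤ
deriving DecidableEq

/-- Derived addition of a period with rounding mode `r`:
`e +r (py, pm, pd) = rnd_r((e +y py) +m pm) +d pd`. -/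
def addPeriod (r : RMode) (e : DValue) (p : Period) : DValue :=
  ((rnd r ((e.addY p.py).addM p.pm)).addD p.pd)

/-- Strict lexicographic order on dates. -/
def DateLt (y1 m1 d1 y2 m2 d2 : ℤ) : Prop :=
  y1 < y2 ∨ (y1 = y2 ∧ (m1 < m2 ∨ (m1 = m2 ∧ d1 < d2)))

/-- Large lexicographic order on dates. -/
def DateLe (y1 m1 d1 y2 m2 d2 : ℤ) : Prop :=
  y1 < y2 ∨ (y1 = y2 ∧ (m1 < m2 ∨ (m1 = m2 ∧ d1 ≤ d2)))

/-- Comparison lifted to values: it holds only between two dates. -/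
def DValue.lt : DValue → DValue → Prop
  | .date y1 m1 d1, .date y2 m2 d2 => DateLt y1 m1 d1 y2 m2 d2
  | _, _ => False

/-- Comparison lifted to values: it holds only between two dates. -/
def DValue.le : DValue → DValue → Prop
  | .date y1 m1 d1, .date y2 m2 d2 => DateLe y1 m1 d1 y2 m2 d2
  | _, _ => False

/-- A value is a valid date: it is not `⊥` and its components are valid. -/
def IsValidDate : DValue → Prop
  | .date y m d => ValidDate y m d
  | .bot => False

def yearOf : DValue → ℤ
  | .date y _ _ => y
  | .bot => 0

def monthOf : DValue → ℤ
  | .date _ m _ => m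
  | .bot => 0

def dayOf : DValue → ℤ
  | .date _ _ d => d
  | .bot => 0

/-- Date units: year, month, day. -/
inductive DUnit : Type
  | year | month | day
deriving DecidableEq

/-- Addition of `n` units to a value. -/
def addU : DUnit → DValue → ℤ → DValue
  | .year, v, n => v.addY n
  | .month, v, n => v.addM n
  | .day, v, n => v.addD n

/-- Componentwise addition of periods. -/
def Period.add (p q : Period) : Period :=
  ⟨p.py + q.py, p.pm + q.pm, p.pd + q.pd⟩

/-!
Place the days on a time line: months are numbered consecutively over all years, and a date gets
the number of days before its month plus its day of the month. Day addition is then translation on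
the time line, whatever the lengths of the months. When the day overflows its month, rounding down
and rounding up give the last day of that month and the first day of the next one, whose positions
differ by one; adding days keeps them apart.
-/

/-- The months of all years, numbered consecutively, with January of year `0` as month `0`. -/
def monthIndex (y m : ℤ) : ℤ := 12 * y + (m - 1)

/-- The number of days in the month with index `k`. -/
def monthLength (k : ℤ) : ℤ := nbDays (k / 12) (k % 12 + 1)

/-- The number of days from the first day of month `0` to the first day of month `k`, negative for
`k < 0`. One of the two sums is always empty. -/
noncomputable def daysBeforeMonth (k : ℤ) : ℤ :=
  ∑ j ∈ Finset.Ico 0 k, monthLength j - ∑ j ∈ Finset.Ico k 0, monthLength j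

/-- The position of a value on the time line, counted in days. The error element has position `⊥`,
which addition in `WithBot ℤ` absorbs just as the operations on values absorb the error. -/
noncomputable def DValue.dayNumber : DValue → WithBot ℤ
  | .date y m d => ↑(daysBeforeMonth (monthIndex y m) + d)
  | .bot => ⊥

theorem monthLength_monthIndex {y m : ℤ} (hm : 1 ≤ m ∧ m ≤ 12) :
    monthLength (monthIndex y m) = nbDays y m := by
  have year_eq : monthIndex y m / 12 = y := by rw [monthIndex]; omega
  have month_eq : monthIndex y m % 12 + 1 = m := by rw [monthIndex]; omega
  rw [monthLength, year_eq, month_eq]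

theorem daysBeforeMonth_add_one (k : ℤ) :
    daysBeforeMonth (k + 1) = daysBeforeMonth k + monthLength k := by
  unfold daysBeforeMonth
  rcases le_or_gt 0 k with hk | hk
  · rw [← Finset.insert_Ico_right_eq_Ico_add_one hk, Finset.sum_insert (by simp),
      Finset.Ico_eq_empty_of_le hk, Finset.Ico_eq_empty_of_le (by omega : (0 : ℤ) ≤ k + 1)]
    ring
  · rw [← Finset.insert_Ico_add_one_left_eq_Ico hk, Finset.sum_insert (by simp),
      Finset.Ico_eq_empty_of_le hk.le, Finset.Ico_eq_empty_of_le (by omega : k + 1 ≤ 0)]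
    ring

theorem validDate_one {y m : ℤ} (hm : 1 ≤ m ∧ m ≤ 12) : ValidDate y m 1 :=
  ⟨hm.1, hm.2, le_rfl, by linarith [nbDays_bounds y m]⟩

theorem validDate_nbDays {y m : ℤ} (hm : 1 ≤ m ∧ m ≤ 12) : ValidDate y m (nbDays y m) :=
  ⟨hm.1, hm.2, by linarith [nbDays_bounds y m], le_rfl⟩

theorem exists_addMonths_eq_date (y : ℤ) {m : ℤ} (hm : 1 ≤ m ∧ m ≤ 12) (d n : ℤ) :
    ∃ y' m', addMonths y m d n = .date y' m' d ∧ (1 ≤ m' ∧ m' ≤ 12) ∧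
      monthIndex y' m' = monthIndex y m + n := by
  fun_induction addMonths y m d n with
  | case1 y n _ hn => exact ⟨y, m + n, rfl, hn, by simp only [monthIndex]; ring⟩
  | case2 y n _ _ _ ih =>
    obtain ⟨y', m', h_eq, hm', h_index⟩ := ih
    exact ⟨y', m', h_eq, hm', by rw [h_index]; simp only [monthIndex]; ring⟩
  | case3 y n _ _ _ ih =>
    obtain ⟨y', m', h_eq, hm', h_index⟩ := ih
    exact ⟨y', m', h_eq, hm', by rw [h_index]; simp only [monthIndex]; ring⟩
  | case4 y n h => exact absurd hm h

theorem addMonths_ne_bot (y : ℤ) {m : ℤ} (hm : 1 ≤ m ∧ m ≤ 12) (d n : ℤ) :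
    addMonths y m d n ≠ .bot := by
  obtain ⟨y', m', h_eq, -⟩ := exists_addMonths_eq_date y hm d n
  simp [h_eq]

theorem month_bounds_and_monthIndex_of_addMonths_eq_date {y m d n y' m' d' : ℤ}
    (hm : 1 ≤ m ∧ m ≤ 12) (h : addMonths y m d n = .date y' m' d') :
    (1 ≤ m' ∧ m' ≤ 12) ∧ monthIndex y' m' = monthIndex y m + n := by
  obtain ⟨_, _, h_eq, h_month⟩ := exists_addMonths_eq_date y hm d n
  obtain ⟨rfl, rfl, -⟩ := DValue.date.inj (h.symm.trans h_eq)
  exact h_month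

namespace DValue

theorem dayNumber_date_add (y m d n : ℤ) :
    (date y m (d + n)).dayNumber = (date y m d).dayNumber + n := by
  simp only [dayNumber]
  norm_cast
  ring

theorem dayNumber_first_of_next_month {y m y' m' : ℤ} (hm : 1 ≤ m ∧ m ≤ 12)
    (h_next : monthIndex y' m' = monthIndex y m + 1) :
    (date y' m' 1).dayNumber = (date y m (nbDays y m + 1)).dayNumber := by
  simp only [dayNumber, h_next, daysBeforeMonth_add_one, monthLength_monthIndex hm, add_assoc]

theorem dayNumber_addDays {y m d : ℤ} (h : ValidDate y m d) (n : ℤ) :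
    (addDays y m d n).dayNumber = (date y m d).dayNumber + n := by
  fun_induction addDays y m d n with
  | case1 => exact dayNumber_date_add ..
  | case2 y m d n hm _ _ _ y' m' _ h_add ih =>
    obtain ⟨hm', h_next⟩ := month_bounds_and_monthIndex_of_addMonths_eq_date hm h_add
    rw [ih (validDate_one hm'), dayNumber_first_of_next_month hm h_next,
      ← dayNumber_date_add, ← dayNumber_date_add]
    congr 2
    ring
  | case3 y m d n hm _ _ _ h_add => exact absurd h_add (addMonths_ne_bot y hm _ _)
  | case4 y m d n hm _ _ _ _ ih =>
    rw [ih (validDate_one hm), ← dayNumber_date_add, ← dayNumber_date_add]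
    congr 2
    ring
  | case5 y m d n hm hd _ _ hd_le y' m' _ h_add ih =>
    obtain ⟨hm', h_prev⟩ := month_bounds_and_monthIndex_of_addMonths_eq_date hm h_add
    obtain rfl : d = 1 := by omega
    rw [ih (validDate_one hm'),
      dayNumber_first_of_next_month (y' := y) (m' := m) hm' (by rw [h_prev]; ring),
      ← dayNumber_date_add, ← dayNumber_date_add]
    congr 2
    ring
  | case6 y m d n hm _ _ _ _ h_add => exact absurd h_add (addMonths_ne_bot y hm _ _)
  | case7 y m d n _ hd => exact absurd h.2.2 hd
  | case8 y m d n hm => exact absurd ⟨h.1, h.2.1⟩ hm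

end DValue

theorem addDays_ne_bot {y m d : ℤ} (h : ValidDate y m d) (n : ℤ) : addDays y m d n ≠ .bot := by
  intro h_bot
  have h_number := DValue.dayNumber_addDays h n
  rw [h_bot] at h_number
  exact WithBot.bot_ne_coe h_number

section Rounding

variable {y m d : ℤ}

theorem rnd_of_le_nbDays (r : RMode) (hd : 1 ≤ d) (h_le : d ≤ nbDays y m) :
    rnd r (.date y m d) = .date y m d := by
  simp [rnd, hd, h_le]

theorem rnd_err_of_nbDays_lt (h_lt : nbDays y m < d) : rnd .err (.date y m d) = .bot := by
  simp [rnd, h_lt.not_ge]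

theorem rnd_down_of_nbDays_lt (h_lt : nbDays y m < d) :
    rnd .down (.date y m d) = .date y m (nbDays y m) := by
  have hd : ¬ d < 1 := by linarith [nbDays_bounds y m]
  simp [rnd, h_lt.not_ge, hd]

theorem exists_rnd_up_eq_date_of_nbDays_lt (hm : 1 ≤ m ∧ m ≤ 12) (h_lt : nbDays y m < d) :
    ∃ y' m', rnd .up (.date y m d) = .date y' m' 1 ∧ (1 ≤ m' ∧ m' ≤ 12) ∧
      monthIndex y' m' = monthIndex y m + 1 := by
  obtain ⟨y', m', h_add, h_month⟩ := exists_addMonths_eq_date y hm d 1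
  have hd : ¬ d < 1 := by linarith [nbDays_bounds y m]
  exact ⟨y', m', by simp [rnd, h_lt.not_ge, hd, h_add], h_month⟩

theorem addD_rnd_down_ne_addD_rnd_up (hm : 1 ≤ m ∧ m ≤ 12) (h_lt : nbDays y m < d) (n : ℤ) :
    (rnd .down (.date y m d)).addD n ≠ (rnd .up (.date y m d)).addD n := by
  obtain ⟨y', m', h_up, hm', h_next⟩ := exists_rnd_up_eq_date_of_nbDays_lt hm h_lt
  simp only [rnd_down_of_nbDays_lt h_lt, h_up, DValue.addD]
  intro h_eq
  have h_number := congrArg DValue.dayNumber h_eq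
  rw [DValue.dayNumber_addDays (validDate_nbDays hm), DValue.dayNumber_addDays (validDate_one hm'),
    DValue.dayNumber_first_of_next_month hm h_next] at h_number
  simp only [DValue.dayNumber] at h_number
  norm_cast at h_number
  omega

theorem addD_rnd_err_eq_bot_iff (hm : 1 ≤ m ∧ m ≤ 12) (hd : 1 ≤ d) (n : ℤ) :
    (rnd .err (.date y m d)).addD n = .bot ↔
      (rnd .down (.date y m d)).addD n ≠ (rnd .up (.date y m d)).addD n := by
  rcases le_or_gt d (nbDays y m) with h_le | h_lt
  · have h_ne_bot := addDays_ne_bot ⟨hm.1, hm.2, hd, h_le⟩ n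
    simp [rnd_of_le_nbDays _ hd h_le, DValue.addD, h_ne_bot]
  · rw [rnd_err_of_nbDays_lt h_lt]
    exact iff_of_true rfl (addD_rnd_down_ne_addD_rnd_up hm h_lt n)

end Rounding

theorem ambiguity_characterizations_equiv_general (y m d : ℤ) (p : Period)
    (hm : 1 ≤ m ∧ m ≤ 12) (hd : 1 ≤ d) :
    addPeriod RMode.err (DValue.date y m d) p = DValue.bot ↔
      addPeriod RMode.down (DValue.date y m d) p ≠
        addPeriod RMode.up (DValue.date y m d) p := by
  obtain ⟨y', m', h_add, hm', -⟩ := exists_addMonths_eq_date (y + p.py) hm d p.pm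
  simp only [addPeriod, DValue.addY, DValue.addM, h_add]
  exact addD_rnd_err_eq_bot_iff hm' hd p.pd

/-- **Equivalence of the two characterizations of ambiguity**: for every valid
date `D` and every period `p = (py, pm, pd)`, the computation is ambiguous in
the intensional sense iff the two non-error rounding modes disagree, i.e.
`D +⊥ p = ⊥` if and only if `D +↓ p ≠ D +↑ p`. -/
theorem ambiguity_characterizations_equiv (y m d : ℤ) (p : Period)
    (h : ValidDate y m d) :
    addPeriod RMode.err (DValue.date y m d) p = DValue.bot ↔
      addPeriod RMode.down (DValue.date y m d) p ≠
        addPeriod RMode.up (DValue.date y m d) p :=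
  ambiguity_characterizations_equiv_general y m d p ⟨h.1, h.2.1⟩ h.2.2.1
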